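/- arXiv:0811.4102 — 2 statements merged into one kernel-verified Lean document; each statement's English description precedes it below -/
import Mathlib

section
/- Consider the polynomial P(w) = (3969/100)·w^5 + (1246/100)·w^4 + 65068/1000 over ℂ (obtained from the closed-loop characteristic pseudo-polynomial 39.69 s^{1.25} + 12.46 s + 65.068 by the substitution w = s^{1/4}). There exists a root w of P with |arg w| < π/4, and every root w of P with |arg w| < π/4 satisfies |arg w| > π/8. (Hence the fractional-order closed-loop control system with transfer function (12.46 s + 64.47)/(39.69 s^{1.25} + 12.46 s + 65.068) is stable.) -/
open Real

/-!
A polynomial of degree `d` with nonnegative coefficients has no nonzero root in the sector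
`|arg w| < π / d`: there, rotating its terms by `-(d / 2) * arg w` puts them all in the open right
half-plane, so their sum is nonzero.

For `a w ^ (n + k) + b w ^ n + c` with `0 < k < n`, a root `r e ^ (i t)` is a closed triangle with
sides `a r ^ (n + k)`, `b r ^ n` and `c`. For `t` between `π / (n + k)` and `π / n` the law of sines
prescribes `r ^ (n + k)` and `r ^ n` as positive functions of `t`. They are powers of a common `r`
as soon as `(r ^ (n + k)) ^ n = (r ^ n) ^ (n + k)`, and this equation has a solution by the
intermediate value theorem: the left side vanishes only at `π / n`, the right side only at
`π / (n + k)`.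
-/

open Polynomial

lemma re_exp_neg_mul_I_mul_pow (w : ℂ) (φ : ℝ) (n : ℕ) :
    (Complex.exp (-φ * Complex.I) * w ^ n).re = ‖w‖ ^ n * cos (n * Complex.arg w - φ) := by
  have polar : Complex.exp (-φ * Complex.I) * w ^ n
      = ((‖w‖ ^ n : ℝ) : ℂ) * Complex.exp ((n * Complex.arg w - φ : ℝ) * Complex.I) := by
    conv_lhs => rw [← Complex.norm_mul_exp_arg_mul_I w, mul_pow, ← Complex.exp_nat_mul]
    rw [mul_left_comm, ← Complex.exp_add]
    push_cast
    ring_nf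
  rw [polar, Complex.re_ofReal_mul, Complex.exp_ofReal_mul_I_re]

lemma cos_sub_half_mul_pos {x d θ : ℝ} (hx₀ : 0 ≤ x) (hxd : x ≤ d) (hθ : d * |θ| < π) :
    0 < cos (x * θ - d / 2 * θ) := by
  have h : |x * θ - d / 2 * θ| < π / 2 := calc
    |x * θ - d / 2 * θ| = |x - d / 2| * |θ| := by rw [← sub_mul, abs_mul]
    _ ≤ d / 2 * |θ| := by
      gcongr
      exact abs_le.mpr ⟨by linarith, by linarith⟩
    _ < π / 2 := by linarith
  exact cos_pos_of_mem_Ioo (abs_lt.mp h)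

theorem pi_div_natDegree_le_abs_arg_of_aeval_eq_zero {p : ℝ[X]} (hp : p ≠ 0)
    (hcoeff : ∀ i, 0 ≤ p.coeff i) {w : ℂ} (hw : w ≠ 0) (hroot : aeval w p = 0) :
    π / p.natDegree ≤ |Complex.arg w| := by
  by_contra! hlt
  set d := p.natDegree
  set θ := Complex.arg w
  have hθ : d * |θ| < π := by
    rcases d.eq_zero_or_pos with hd | hd
    · simpa [hd] using pi_pos
    · rwa [lt_div_iff₀' (by positivity)] at hlt
  have hcos : ∀ i ∈ Finset.range (d + 1), 0 < cos (i * θ - d / 2 * θ) := fun i hi =>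
    cos_sub_half_mul_pos i.cast_nonneg
      (Nat.cast_le.mpr (Nat.lt_succ_iff.mp (Finset.mem_range.mp hi))) hθ
  have hw' : 0 < ‖w‖ := norm_pos_iff.mpr hw
  have hd : d ∈ Finset.range (d + 1) := Finset.self_mem_range_succ d
  have hlead : 0 < p.coeff d := (hcoeff d).lt_of_ne' (leadingCoeff_ne_zero.mpr hp)
  have hpos : 0 < ∑ i ∈ Finset.range (d + 1),
      p.coeff i * (‖w‖ ^ i * cos (i * θ - d / 2 * θ)) :=
    Finset.sum_pos'
      (fun i hi => mul_nonneg (hcoeff i) (mul_pos (pow_pos hw' i) (hcos i hi)).le)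
      ⟨d, hd, mul_pos hlead (mul_pos (pow_pos hw' d) (hcos d hd))⟩
  have hre : (Complex.exp (-(d / 2 * θ : ℝ) * Complex.I) * aeval w p).re
      = ∑ i ∈ Finset.range (d + 1), p.coeff i * (‖w‖ ^ i * cos (i * θ - d / 2 * θ)) := by
    rw [aeval_eq_sum_range, Finset.mul_sum, Complex.re_sum]
    refine Finset.sum_congr rfl fun i _ => ?_
    rw [mul_smul_comm, Complex.smul_re, re_exp_neg_mul_I_mul_pow, smul_eq_mul]
  rw [hroot, mul_zero, Complex.zero_re] at hre
  exact hpos.ne hre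

lemma sin_mul_exp_sub_sin_mul_exp (α β : ℂ) :
    Complex.sin β * Complex.exp (α * Complex.I) - Complex.sin α * Complex.exp (β * Complex.I)
      = Complex.sin (β - α) := by
  rw [Complex.exp_mul_I, Complex.exp_mul_I, Complex.sin_sub]
  ring

lemma exists_pos_pow_eq_and_pow_eq {x y : ℝ} (hx : 0 < x) (hy : 0 < y) {m n : ℕ} (hn : n ≠ 0)
    (hxy : x ^ n = y ^ m) : ∃ r, 0 < r ∧ r ^ m = x ∧ r ^ n = y := by
  have hr : (y ^ (n⁻¹ : ℝ)) ^ n = y := rpow_inv_natCast_pow hy.le hn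
  refine ⟨y ^ (n⁻¹ : ℝ), by positivity, ?_, hr⟩
  rw [← pow_left_inj₀ (by positivity) hx.le hn, pow_right_comm, hr, hxy]

lemma sin_mul_pos_of_lt_pi_div {x t : ℝ} (hx : 0 < x) (ht : 0 < t) (htx : t < π / x) :
    0 < sin (x * t) :=
  sin_pos_of_pos_of_lt_pi (mul_pos hx ht) ((lt_div_iff₀' hx).mp htx)

lemma sin_add_mul_neg {x y t : ℝ} (hy : 0 < y) (hyx : y < x) (ht : π / (x + y) < t)
    (htx : t ≤ π / x) : sin ((x + y) * t) < 0 := by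
  have hx : 0 < x := hy.trans hyx
  have ht₀ : 0 < t := lt_trans (by positivity) ht
  rw [div_lt_iff₀' (by positivity)] at ht
  rw [le_div_iff₀' hx] at htx
  have hyt : y * t < x * t := by gcongr
  rw [← sin_sub_two_pi]
  exact sin_neg_of_neg_of_neg_pi_lt (by linarith) (by linarith)

lemma exists_mem_Ioo_pow_eq_pow {f g : ℝ → ℝ} {l u : ℝ} (hlu : l ≤ u)
    (hf : ContinuousOn f (Set.Icc l u)) (hg : ContinuousOn g (Set.Icc l u))
    (hfl : 0 < f l) (hgl : g l = 0) (hfu : f u = 0) (hgu : 0 < g u)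
    {m n : ℕ} (hm : m ≠ 0) (hn : n ≠ 0) : ∃ t ∈ Set.Ioo l u, f t ^ m = g t ^ n := by
  have hl : 0 < f l ^ m - g l ^ n := by
    rw [hgl, zero_pow hn, sub_zero]
    positivity
  have hu : f u ^ m - g u ^ n < 0 := by
    rw [hfu, zero_pow hm, zero_sub, neg_lt_zero]
    positivity
  obtain ⟨t, ht, hzero⟩ := intermediate_value_Ioo' hlu ((hf.pow m).sub (hg.pow n)) ⟨hu, hl⟩
  exact ⟨t, ht, sub_eq_zero.mp hzero⟩

section Trinomial

variable {a b c : ℝ} {n k : ℕ}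

lemma exists_angle_of_law_of_sines (ha : 0 < a) (hb : 0 < b) (hc : 0 < c) (hk : 0 < k)
    (hkn : k < n) :
    ∃ t ∈ Set.Ioo (π / (n + k)) (π / n),
      (c * sin (n * t) / (a * sin (k * t))) ^ n
        = (-(c * sin ((n + k) * t)) / (b * sin (k * t))) ^ (n + k) := by
  have hn : 0 < n := hk.trans hkn
  have hk' : (0 : ℝ) < k := Nat.cast_pos.mpr hk
  have hkn' : (k : ℝ) < n := Nat.cast_lt.mpr hkn
  have hn' : (0 : ℝ) < n := hk'.trans hkn'
  have hl : 0 < π / (n + k) := by positivity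
  have hlu : π / (n + k) < π / n := by gcongr; linarith
  have hsin_k : ∀ t ∈ Set.Icc (π / (n + k)) (π / n), 0 < sin (k * t) := fun t ht =>
    sin_mul_pos_of_lt_pi_div hk' (hl.trans_le ht.1) (ht.2.trans_lt (by gcongr))
  refine exists_mem_Ioo_pow_eq_pow hlu.le ?_ ?_ ?_ ?_ ?_ ?_ hn.ne' (by omega)
  · exact ContinuousOn.div (by fun_prop) (by fun_prop) fun t ht =>
      (mul_pos ha (hsin_k t ht)).ne'
  · exact ContinuousOn.div (by fun_prop) (by fun_prop) fun t ht =>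
      (mul_pos hb (hsin_k t ht)).ne'
  · exact div_pos (mul_pos hc (sin_mul_pos_of_lt_pi_div hn' hl hlu))
      (mul_pos ha (hsin_k _ (Set.left_mem_Icc.mpr hlu.le)))
  · simp [mul_div_cancel₀ π (by positivity : (n + k : ℝ) ≠ 0)]
  · simp [mul_div_cancel₀ π hn'.ne']
  · exact div_pos (neg_pos.mpr (mul_neg_of_pos_of_neg hc (sin_add_mul_neg hk' hkn' hlu le_rfl)))
      (mul_pos hb (hsin_k _ (Set.right_mem_Icc.mpr hlu.le)))

lemma trinomial_eq_zero_of_law_of_sines {r t : ℝ} (ha : a ≠ 0) (hb : b ≠ 0)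
    (ht : sin (k * t) ≠ 0) (hrnk : r ^ (n + k) = c * sin (n * t) / (a * sin (k * t)))
    (hrn : r ^ n = -(c * sin ((n + k) * t)) / (b * sin (k * t))) :
    a * (r * Complex.exp (t * Complex.I)) ^ (n + k)
      + b * (r * Complex.exp (t * Complex.I)) ^ n + c = 0 := by
  have side_nk : a * r ^ (n + k) = c / sin (k * t) * sin (n * t) := by
    rw [hrnk]
    field_simp
  have side_n : b * r ^ n = -(c / sin (k * t) * sin ((n + k) * t)) := by
    rw [hrn]
    field_simp
  have side_c : c = c / sin (k * t) * sin (k * t) := (div_mul_cancel₀ c ht).symm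
  apply_fun Complex.ofReal at side_nk side_n side_c
  push_cast at side_nk side_n side_c
  have closes := sin_mul_exp_sub_sin_mul_exp ((n + k) * t) (n * t)
  rw [show (n * t - (n + k) * t : ℂ) = -(k * t) by ring, Complex.sin_neg] at closes
  simp only [mul_pow, ← Complex.exp_nat_mul, ← mul_assoc, side_nk, side_n, Nat.cast_add]
  linear_combination c / Complex.sin (k * t) * closes + side_c

lemma exists_trinomial_root_abs_arg_lt (ha : 0 < a) (hb : 0 < b) (hc : 0 < c) (hk : 0 < k)
    (hkn : k < n) :
    ∃ w : ℂ, a * w ^ (n + k) + b * w ^ n + c = 0 ∧ |Complex.arg w| < π / n := by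
  obtain ⟨t, ⟨hlt, htu⟩, hpow⟩ := exists_angle_of_law_of_sines ha hb hc hk hkn
  have hk' : (0 : ℝ) < k := Nat.cast_pos.mpr hk
  have hkn' : (k : ℝ) < n := Nat.cast_lt.mpr hkn
  have hn' : (1 : ℝ) ≤ n := Nat.one_le_cast.mpr (hk.trans hkn)
  have ht : 0 < t := lt_trans (by positivity) hlt
  have htπ : t ≤ π := htu.le.trans (div_le_self pi_pos.le hn')
  have hsin_n : 0 < sin (n * t) := sin_mul_pos_of_lt_pi_div (hk'.trans hkn') ht htu
  have hsin_k : 0 < sin (k * t) := sin_mul_pos_of_lt_pi_div hk' ht (htu.trans (by gcongr))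
  have hsin_nk : sin ((n + k) * t) < 0 := sin_add_mul_neg hk' hkn' hlt htu.le
  obtain ⟨r, hr, hrnk, hrn⟩ := exists_pos_pow_eq_and_pow_eq
    (div_pos (mul_pos hc hsin_n) (mul_pos ha hsin_k))
    (div_pos (neg_pos.mpr (mul_neg_of_pos_of_neg hc hsin_nk)) (mul_pos hb hsin_k))
    (hk.trans hkn).ne' hpow
  refine ⟨r * Complex.exp (t * Complex.I),
    trinomial_eq_zero_of_law_of_sines ha.ne' hb.ne' hsin_k.ne' hrnk hrn, ?_⟩
  rwa [Complex.exp_mul_I, Complex.arg_mul_cos_add_sin_mul_I hr ⟨by linarith, htπ⟩, abs_of_pos ht]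

lemma pi_div_le_abs_arg_of_trinomial_eq_zero (ha : 0 < a) (hb : 0 ≤ b) (hc : 0 < c) (hk : 0 < k)
    (hn : 0 < n) {w : ℂ} (hw : a * w ^ (n + k) + b * w ^ n + c = 0) :
    π / (n + k) ≤ |Complex.arg w| := by
  have hdeg : (trinomial 0 n (n + k) c b a).natDegree = n + k :=
    trinomial_natDegree hn (Nat.lt_add_of_pos_right hk) ha.ne'
  have hw₀ : w ≠ 0 := by
    rintro rfl
    simp [hn.ne', hc.ne'] at hw
  have hp : trinomial 0 n (n + k) c b a ≠ 0 := by
    rintro hzero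
    rw [hzero, natDegree_zero] at hdeg
    omega
  have hcoeff : ∀ i, 0 ≤ (trinomial 0 n (n + k) c b a).coeff i := fun i => by
    simp only [trinomial_def, coeff_add, coeff_C_mul_X_pow]
    positivity
  have hroot : aeval w (trinomial 0 n (n + k) c b a) = 0 := by
    simp only [trinomial_def, map_add, map_mul, map_pow, aeval_C, aeval_X, Complex.coe_algebraMap]
    linear_combination hw
  simpa [hdeg] using pi_div_natDegree_le_abs_arg_of_aeval_eq_zero hp hcoeff hw₀ hroot

end Trinomial

theorem example6_stability_general {a b c : ℝ} (ha : 0 < a) (hb : 0 < b) (hc : 0 < c) {n k : ℕ}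
    (hk : 0 < k) (hkn : k < n) :
    (∃ w : ℂ, a * w ^ (n + k) + b * w ^ n + c = 0 ∧ |Complex.arg w| < π / n) ∧
      ∀ w : ℂ, a * w ^ (n + k) + b * w ^ n + c = 0 → π / (n + k) ≤ |Complex.arg w| :=
  ⟨exists_trinomial_root_abs_arg_lt ha hb hc hk hkn, fun _ =>
    pi_div_le_abs_arg_of_trinomial_eq_zero ha hb.le hc hk (hk.trans hkn)⟩

/-- Stability of the fractional-order closed-loop system with characteristic
pseudo-polynomial `39.69 s^{1.25} + 12.46 s + 65.068`: for the polynomial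
`P(w) = (3969/100) w⁵ + (1246/100) w⁴ + 65068/1000` (obtained by `w = s^{1/4}`),
there is a root with `|arg w| < π/4`, and every root on the first Riemann sheet
`|arg w| < π/4` lies in the stable sector `|arg w| > π/8`. -/
theorem example6_stability :
    (∃ w : ℂ, (3969 / 100) * w ^ 5 + (1246 / 100) * w ^ 4 + 65068 / 1000 = 0 ∧
        |Complex.arg w| < π / 4) ∧
      ∀ w : ℂ, (3969 / 100) * w ^ 5 + (1246 / 100) * w ^ 4 + 65068 / 1000 = 0 →
        |Complex.arg w| < π / 4 → |Complex.arg w| > π / 8 := by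
  obtain ⟨hex, hsector⟩ := example6_stability_general (a := 3969 / 100) (b := 1246 / 100)
    (c := 65068 / 1000) (by norm_num) (by norm_num) (by norm_num) one_pos (by norm_num : 1 < 4)
  push_cast at hex hsector
  have hlt : π / 8 < π / (4 + 1) := by gcongr; norm_num
  exact ⟨hex, fun w hw _ => hlt.trans_le (hsector w hw)⟩
end

section
/- The polynomial λ^27 + 35·λ^19 + 3·λ^18 − 28·λ^17 + 105·λ^10 − 21·λ^8 + 4410 has a complex root λ with λ ≠ 0 and |arg λ| < π/20. (This is the characteristic equation det(diag(λ^{m q₁}, λ^{m q₂}, λ^{m q₃}) − J) = 0, with m = 10 and orders q = (0.8, 1.0, 0.9), at the scroll saddle points of the fractional-order Chen system; the existence of a root in the unstable sector |arg λ| < γπ/2 with γ = 1/10 is the necessary condition for the system to exhibit a double-scroll chaotic attractor.) -/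
open Real

/-!
If `P` has degree `n` and splits, then `P'(z) / P(z) = ∑ 1 / (z - r)` over the roots `r`, so the
root nearest to `z` is at distance at most `n |P(z)| / |P'(z)|`. At `z = 1.29284 + 0.2033 i` this
bound is below `10⁻⁵` for the Chen polynomial, and the disk of radius `10⁻⁵` about `z` lies in the
sector `|arg λ| < π / 20`, which is the cone `cos (π / 20) * |λ| < Re λ`.
-/

section RootLocation

open Polynomial

theorem exists_isRoot_norm_sub_mul_norm_eval_derivative_le {K : Type*} [NormedField K] {P : K[X]}
    (hP : P.Splits) (hdeg : P.natDegree ≠ 0) (z : K) :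
    ∃ r, P.IsRoot r ∧ ‖z - r‖ * ‖P.derivative.eval z‖ ≤ P.natDegree * ‖P.eval z‖ := by
  by_cases hz : P.eval z = 0
  · exact ⟨z, hz, by simp [hz]⟩
  obtain ⟨r, hr, nearest⟩ := P.roots.exists_min_image (fun s ↦ ‖z - s‖) (hP.roots_ne_zero hdeg)
  have hroot : P.IsRoot r := isRoot_of_mem_roots hr
  have hpos : 0 < ‖z - r‖ := by
    rw [norm_sub_pos_iff]
    rintro rfl
    exact hz hroot
  refine ⟨r, hroot, ?_⟩
  have hlog : ‖P.derivative.eval z‖ / ‖P.eval z‖ ≤ P.natDegree / ‖z - r‖ :=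
    calc ‖P.derivative.eval z‖ / ‖P.eval z‖
        = ‖(P.roots.map fun s ↦ 1 / (z - s)).sum‖ := by
          rw [← norm_div, hP.eval_derivative_div_eval_of_ne_zero hz]
      _ ≤ (P.roots.map fun s ↦ ‖1 / (z - s)‖).sum := by
          simpa only [Multiset.map_map, Function.comp_def] using
            norm_multiset_sum_le (P.roots.map fun s ↦ 1 / (z - s))
      _ ≤ (P.roots.map fun _ ↦ 1 / ‖z - r‖).sum := by
          refine Multiset.sum_map_le_sum_map _ _ fun s hs ↦ ?_
          rw [norm_div, norm_one]
          exact one_div_le_one_div_of_le hpos (nearest s hs)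
      _ = P.natDegree / ‖z - r‖ := by
          rw [Multiset.map_const', Multiset.sum_replicate, ← hP.natDegree_eq_card_roots,
            nsmul_eq_mul, mul_one_div]
  rwa [div_le_div_iff₀ (norm_pos_iff.2 hz) hpos, mul_comm] at hlog

end RootLocation

theorem abs_arg_lt_iff_cos_mul_norm_lt_re {z : ℂ} {θ : ℝ} (hz : z ≠ 0) (hθ₀ : 0 ≤ θ)
    (hθπ : θ ≤ π) : |z.arg| < θ ↔ cos θ * ‖z‖ < z.re := by
  rw [← Complex.norm_mul_cos_arg z, mul_comm, mul_lt_mul_iff_right₀ (norm_pos_iff.2 hz),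
    ← cos_abs z.arg, strictAntiOn_cos.lt_iff_gt ⟨hθ₀, hθπ⟩ ⟨abs_nonneg _, Complex.abs_arg_le_pi z⟩]

theorem mul_norm_lt_re_of_norm_sub_le {z w : ℂ} {c δ : ℝ} (hc : 0 ≤ c) (hzw : ‖z - w‖ ≤ δ)
    (hz : c * (‖z‖ + δ) < z.re - δ) : c * ‖w‖ < w.re :=
  calc c * ‖w‖ ≤ c * (‖z‖ + δ) := by
        gcongr
        linarith [norm_sub_norm_le w z, norm_sub_rev w z]
    _ < z.re - δ := hz
    _ ≤ w.re := by
        have hre : z.re - w.re ≤ ‖z - w‖ := Complex.re_le_norm (z - w)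
        linarith

theorem cos_pi_div_twenty_lt : cos (π / 20) < 0.9877 := by
  have hlower : 0.15707 < π / 20 := by linarith [pi_gt_d4]
  have hupper : π / 20 < 0.1575 := by linarith [pi_lt_d2]
  have htaylor : cos (π / 20) - (1 - (π / 20) ^ 2 / 2) ≤ |π / 20| ^ 4 * (5 / 96) :=
    le_of_abs_le (cos_bound (abs_le.2 ⟨by linarith, by linarith⟩))
  have hquad : 0.15707 ^ 2 < (π / 20) ^ 2 := by gcongr
  have hquart : |π / 20| ^ 4 < 0.1575 ^ 4 := by
    rw [abs_of_pos (by positivity)]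
    gcongr
  linarith

section ChenPolynomial

open Polynomial

/-- The characteristic polynomial `det (diag (λ⁸, λ¹⁰, λ⁹) - J)` of the fractional-order Chen system
at its scroll saddle points, in expanded form. -/
noncomputable def chenPoly : ℂ[X] :=
  X ^ 27 + 35 * X ^ 19 + 3 * X ^ 18 - 28 * X ^ 17 + 105 * X ^ 10 - 21 * X ^ 8 + 4410

theorem natDegree_chenPoly : chenPoly.natDegree = 27 := by
  unfold chenPoly
  compute_degree!

/-- An approximate root of `chenPoly`, a numerically computed root rounded to five decimals and used
as the base point for the root location bound. -/
noncomputable def chenApproxRoot : ℂ := ⟨1.29284, 0.2033⟩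

theorem norm_eval_chenPoly_lt :
    27 * ‖chenPoly.eval chenApproxRoot‖ < 0.00001 * ‖chenPoly.derivative.eval chenApproxRoot‖ := by
  have hsq : 27 ^ 2 * Complex.normSq (chenPoly.eval chenApproxRoot) <
      0.00001 ^ 2 * Complex.normSq (chenPoly.derivative.eval chenApproxRoot) := by
    norm_num [chenPoly, chenApproxRoot, pow_succ, Complex.normSq_apply]
  rw [Complex.normSq_eq_norm_sq, Complex.normSq_eq_norm_sq, ← mul_pow, ← mul_pow] at hsq
  exact lt_of_pow_lt_pow_left₀ 2 (by positivity) hsq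

theorem exists_isRoot_chenPoly_norm_sub_lt :
    ∃ r, chenPoly.IsRoot r ∧ ‖chenApproxRoot - r‖ < 0.00001 := by
  obtain ⟨r, hr, hdist⟩ := exists_isRoot_norm_sub_mul_norm_eval_derivative_le
    (IsAlgClosed.splits chenPoly) (by simp [natDegree_chenPoly]) chenApproxRoot
  rw [natDegree_chenPoly] at hdist
  exact ⟨r, hr, lt_of_mul_lt_mul_right (hdist.trans_lt norm_eval_chenPoly_lt) (norm_nonneg _)⟩

theorem norm_chenApproxRoot_lt : ‖chenApproxRoot‖ < 1.3088 := by
  rw [Complex.norm_eq_sqrt_sq_add_sq, sqrt_lt' (by norm_num)]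
  norm_num [chenApproxRoot]

end ChenPolynomial

/-- The characteristic equation of the fractional-order Chen system at its
scroll saddle points, `λ²⁷ + 35 λ¹⁹ + 3 λ¹⁸ − 28 λ¹⁷ + 105 λ¹⁰ − 21 λ⁸ + 4410 = 0`,
has a nonzero root in the unstable sector `|arg λ| < π/20` (with `γ = 1/10`):
the necessary condition for the double-scroll chaotic attractor. -/
theorem chen_unstable_root :
    ∃ lam : ℂ, lam ^ 27 + 35 * lam ^ 19 + 3 * lam ^ 18 - 28 * lam ^ 17 +
        105 * lam ^ 10 - 21 * lam ^ 8 + 4410 = 0 ∧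
      lam ≠ 0 ∧ |Complex.arg lam| < π / 20 := by
  obtain ⟨r, hroot, hdist⟩ := exists_isRoot_chenPoly_norm_sub_lt
  have hcone : 0.9877 * ‖r‖ < r.re := by
    refine mul_norm_lt_re_of_norm_sub_le (by norm_num) hdist.le ?_
    have hre : chenApproxRoot.re = 1.29284 := rfl
    linarith [norm_chenApproxRoot_lt]
  have hr₀ : r ≠ 0 := by
    rintro rfl
    simp at hcone
  refine ⟨r, by simpa [chenPoly] using hroot, hr₀, ?_⟩
  rw [abs_arg_lt_iff_cos_mul_norm_lt_re hr₀ (by positivity) (by linarith [pi_pos])]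
  calc cos (π / 20) * ‖r‖ ≤ 0.9877 * ‖r‖ := by
        gcongr
        exact cos_pi_div_twenty_lt.le
    _ < r.re := hcone
end
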